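/- Every smooth function germ u : (ℝ²,0) → ℝ in variables (ξ,t) can be written as u(ξ,t) = a(ξ, t²) + t·b(ξ, t²) for smooth function germs a, b. -/

import Mathlib

/-
By Fourier inversion a smooth compactly supported `u` on `E × ℝ` is a superposition of the plane
waves `exp (2πi (⟪η, x⟫ + τ t))`, weighted by the Schwartz function `𝓕 u`, so it suffices to divide
each plane wave with good control in the frequency `(η, τ)`. If `e` is smooth with
`e (θ ^ 2) = cos θ`, then `sin θ = -2 θ e' (θ ^ 2)`, and with `θ = 2πτt` this writes
`exp (2πiτt) = cos θ + i sin θ` as a function of `t ^ 2` plus `t` times a function of `t ^ 2`.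
The even entire function `cos` gives such an `e`, namely `cos √r`; its derivatives are bounded for
`r ≥ 1` because it solves `4 r e'' + 2 e' + e = 0`, and after cutting it off on the negative
half-line `e` has temperate growth. The two integrals against `𝓕 u` are then smooth in
`(x, t ^ 2)`. A general `u` is cut off to solve the problem locally; the admissible values of the
pair of coefficients at a given point form a convex set, so the local solutions are glued by a
partition of unity.
-/

open Function Filter MeasureTheory Topology
open scoped ContDiff FourierTransform Manifold Nat Real RealInnerProductSpace SchwartzMap

section ParametricIntegral

variable {X Y F : Type*} [NormedAddCommGroup X] [NormedSpace ℝ X] [NormedAddCommGroup F]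
  [NormedSpace ℝ F] [MeasurableSpace Y] {μ : Measure Y}

theorem contDiff_integral_of_locally_dominated {K : X → Y → F}
    (hK : ∀ y, ContDiff ℝ ∞ (K · y))
    (hmeas : ∀ n x, AEStronglyMeasurable (fun y => iteratedFDeriv ℝ n (K · y) x) μ)
    (hbound : ∀ n x₀, ∃ s ∈ 𝓝 x₀, ∃ bound : Y → ℝ, Integrable bound μ ∧
      ∀ y, ∀ x ∈ s, ‖iteratedFDeriv ℝ n (K · y) x‖ ≤ bound y) :
    ContDiff ℝ ∞ fun x => ∫ y, K x y ∂μ := by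
  have hint (n : ℕ) (x : X) : Integrable (fun y => iteratedFDeriv ℝ n (K · y) x) μ := by
    obtain ⟨s, hs, bound, hbound_int, hle⟩ := hbound n x
    exact hbound_int.mono' (hmeas n x) (ae_of_all _ fun y => hle y x (mem_of_mem_nhds hs))
  have hderiv (n : ℕ) (x : X) :
      HasFDerivAt (fun x => ∫ y, iteratedFDeriv ℝ n (K · y) x ∂μ)
        (∫ y, iteratedFDeriv ℝ (n + 1) (K · y) x ∂μ).curryLeft x := by
    let curryₗᵢ := continuousMultilinearCurryLeftEquiv ℝ (fun _ : Fin (n + 1) => X) F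
    let curry : (X [×n + 1]→L[ℝ] F) ≃L[ℝ] (X →L[ℝ] X [×n]→L[ℝ] F) :=
      curryₗᵢ.toContinuousLinearEquiv
    obtain ⟨s, hs, bound, hbound_int, hle⟩ := hbound (n + 1) x
    have hcurry : ∫ y, curry (iteratedFDeriv ℝ (n + 1) (K · y) x) ∂μ =
        curry (∫ y, iteratedFDeriv ℝ (n + 1) (K · y) x ∂μ) :=
      ContinuousLinearEquiv.integral_comp_comm (𝕜 := ℝ) (E := X [×n + 1]→L[ℝ] F)
        (F := X →L[ℝ] X [×n]→L[ℝ] F) curry fun y => iteratedFDeriv ℝ (n + 1) (K · y) x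
    refine (hasFDerivAt_integral_of_dominated_of_fderiv_le hs (.of_forall (hmeas n))
      (hint n x) (curry.continuous.comp_aestronglyMeasurable (hmeas (n + 1) x))
      (ae_of_all _ fun y x hx => (curryₗᵢ.norm_map _).trans_le (hle y x hx)) hbound_int
      (ae_of_all _ fun y x _ => ?_)).congr_fderiv hcurry
    exact (hK y).ftaylorSeries.fderiv n (mod_cast WithTop.coe_lt_top _) x
  have htaylor : HasFTaylorSeriesUpTo ∞ (fun x => ∫ y, K x y ∂μ)
      fun x n => ∫ y, iteratedFDeriv ℝ n (K · y) x ∂μ :=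
    { zero_eq := fun x =>
        ((continuousMultilinearCurryFin0 ℝ X F).toContinuousLinearEquiv.integral_comp_comm _).symm
      fderiv := fun n _ => hderiv n
      cont := fun n _ => continuous_iff_continuousAt.2 fun x => (hderiv n x).continuousAt }
  exact htaylor.contDiff

end ParametricIntegral

section TemperateKernel

variable {V X F : Type*} [NormedAddCommGroup V] [NormedSpace ℝ V]
  [NormedAddCommGroup X] [NormedSpace ℝ X] [NormedAddCommGroup F] [NormedSpace ℝ F]

theorem iteratedFDeriv_comp_prodMk_left {H : V × X → F} (hH : ContDiff ℝ ∞ H) (n : ℕ) (y : V)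
    (x : X) : iteratedFDeriv ℝ n (fun x => H (y, x)) x =
      (iteratedFDeriv ℝ n H (y, x)).compContinuousLinearMap fun _ => .inr ℝ V X := by
  have hshift :
      (fun x => H (y, x)) = (fun p => H ((y, 0) + p)) ∘ ContinuousLinearMap.inr ℝ V X := by
    ext; simp
  rw [hshift, ContinuousLinearMap.iteratedFDeriv_comp_right (n := ∞) _ (by fun_prop) x
    (mod_cast le_top), iteratedFDeriv_comp_add_left]
  simp

theorem norm_iteratedFDeriv_comp_prodMk_left_le {H : V × X → F} (hH : ContDiff ℝ ∞ H) (n : ℕ)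
    (y : V) (x : X) :
    ‖iteratedFDeriv ℝ n (fun x => H (y, x)) x‖ ≤ ‖iteratedFDeriv ℝ n H (y, x)‖ := by
  rw [iteratedFDeriv_comp_prodMk_left hH]
  refine (ContinuousMultilinearMap.norm_compContinuousLinearMap_le _ _).trans
    (mul_le_of_le_one_right (norm_nonneg _) ?_)
  exact Finset.prod_le_one (fun _ _ => norm_nonneg _)
    fun _ _ => ContinuousLinearMap.norm_inr_le_one ℝ V X

@[fun_prop]
theorem hasTemperateGrowth_fst : (fun p : V × X => p.1).HasTemperateGrowth :=
  (ContinuousLinearMap.fst ℝ V X).hasTemperateGrowth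

@[fun_prop]
theorem hasTemperateGrowth_snd : (fun p : V × X => p.2).HasTemperateGrowth :=
  (ContinuousLinearMap.snd ℝ V X).hasTemperateGrowth

theorem hasTemperateGrowth_fderiv {f : V → F} (hf : f.HasTemperateGrowth) :
    (fderiv ℝ f).HasTemperateGrowth := by
  refine ⟨(contDiff_infty_iff_fderiv.1 hf.1).2, fun n => ?_⟩
  simpa only [norm_iteratedFDeriv_fderiv] using hf.2 (n + 1)

theorem hasTemperateGrowth_deriv {f : ℝ → F} (hf : f.HasTemperateGrowth) :
    (deriv f).HasTemperateGrowth :=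
  (ContinuousLinearMap.apply ℝ F (1 : ℝ)).hasTemperateGrowth.comp (hasTemperateGrowth_fderiv hf)

theorem hasTemperateGrowth_prodMk_right (x : X) : (fun y : V => (y, x)).HasTemperateGrowth := by
  simpa using (ContinuousLinearMap.inl ℝ V X).hasTemperateGrowth.fun_add (.const (0, x))

variable [MeasurableSpace V] [BorelSpace V] [SecondCountableTopology V] {μ : Measure V}
  [μ.HasTemperateGrowth]

theorem integrable_one_add_norm_pow_mul_schwartzMap (f : 𝓢(V, F)) (k : ℕ) :
    Integrable (fun y => (1 + ‖y‖) ^ k * ‖f y‖) μ := by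
  simp only [add_comm (1 : ℝ), add_pow, one_pow, mul_one, Finset.sum_mul]
  refine integrable_finsetSum _ fun i _ => ?_
  simpa only [mul_right_comm] using (f.integrable_pow_mul μ i).mul_const _

variable {G : Type*} [NormedAddCommGroup G] [NormedSpace ℂ G]

theorem norm_iteratedFDeriv_smul_const_le {c : X → ℂ} (hc : ContDiff ℝ ∞ c) (n : ℕ) (x : X)
    (v : G) :
    ‖iteratedFDeriv ℝ n (fun x => c x • v) x‖ ≤ ‖iteratedFDeriv ℝ n c x‖ * ‖v‖ := by
  let smulv : ℂ →L[ℝ] G := (ContinuousLinearMap.toSpanSingleton ℂ v).restrictScalars ℝ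
  have hsmulv : ‖smulv‖ = ‖v‖ := by simp [smulv]
  rw [mul_comm, ← hsmulv]
  exact smulv.norm_iteratedFDeriv_comp_left hc.contDiffAt (n := n) (mod_cast le_top)

theorem integrable_smul_schwartzMap {g : V → ℂ} (hg : g.HasTemperateGrowth) (f : 𝓢(V, G)) :
    Integrable (fun y => g y • f y) μ := by
  simpa only [SchwartzMap.smulLeftCLM_apply hg] using
    (SchwartzMap.smulLeftCLM G g f).integrable (μ := μ)

theorem contDiff_integral_smul_schwartzMap {K : V × X → ℂ} (hK : K.HasTemperateGrowth)
    (f : 𝓢(V, G)) : ContDiff ℝ ∞ fun x => ∫ y, K (y, x) • f y ∂μ := by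
  have hf : ContDiff ℝ ∞ f := f.smooth ⊤
  have hKf : ContDiff ℝ ∞ fun p : V × X => K p • f p.1 := hK.1.smul (hf.comp contDiff_fst)
  have hKy (y : V) : ContDiff ℝ ∞ fun x => K (y, x) := hK.1.comp (contDiff_prodMk_right y)
  refine contDiff_integral_of_locally_dominated (fun y => (hKy y).smul contDiff_const)
    (fun n x => ?_) (fun n x₀ => ?_)
  · simp only [iteratedFDeriv_comp_prodMk_left hKf]
    refine Continuous.aestronglyMeasurable ?_
    exact (ContinuousMultilinearMap.compContinuousLinearMapL fun _ : Fin n =>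
      ContinuousLinearMap.inr ℝ V X).continuous.comp
        ((hKf.continuous_iteratedFDeriv (mod_cast le_top)).comp (by fun_prop))
  · obtain ⟨k, C, hC₀, hC⟩ := hK.norm_iteratedFDeriv_le_uniform n
    refine ⟨Metric.closedBall 0 (‖x₀‖ + 1), ?_,
      fun y => C * (2 + ‖x₀‖) ^ k * ((1 + ‖y‖) ^ k * ‖f y‖),
      (integrable_one_add_norm_pow_mul_schwartzMap f k).const_mul _, fun y x hx => ?_⟩
    · exact Metric.closedBall_mem_nhds_of_mem (by simp)
    have hx' : ‖x‖ ≤ ‖x₀‖ + 1 := mem_closedBall_zero_iff.1 hx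
    have hyx : 1 + ‖(y, x)‖ ≤ (2 + ‖x₀‖) * (1 + ‖y‖) := by
      have hprod : ‖(y, x)‖ ≤ ‖y‖ + ‖x‖ := max_le_add_of_nonneg (norm_nonneg y) (norm_nonneg x)
      nlinarith [norm_nonneg x₀, norm_nonneg y]
    calc ‖iteratedFDeriv ℝ n (fun x => K (y, x) • f y) x‖
        ≤ ‖iteratedFDeriv ℝ n (fun x => K (y, x)) x‖ * ‖f y‖ :=
          norm_iteratedFDeriv_smul_const_le (hKy y) n x (f y)
      _ ≤ C * (1 + ‖(y, x)‖) ^ k * ‖f y‖ := by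
          gcongr
          exact (norm_iteratedFDeriv_comp_prodMk_left_le hK.1 n y x).trans (hC n le_rfl _)
      _ ≤ C * ((2 + ‖x₀‖) * (1 + ‖y‖)) ^ k * ‖f y‖ := by gcongr
      _ = C * (2 + ‖x₀‖) ^ k * ((1 + ‖y‖) ^ k * ‖f y‖) := by rw [mul_pow]; ring

end TemperateKernel

section CosSqrt

/-- The power series of the entire function `r ↦ cos √r`. -/
noncomputable def cosSqrtSeries : FormalMultilinearSeries ℝ ℝ ℝ :=
  .ofScalars ℝ fun n => (-1) ^ n / ((2 * n)! : ℝ)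

/-- The entire function `r ↦ cos √r`, equal to `cosh √(-r)` for `r ≤ 0`. -/
noncomputable def cosSqrt : ℝ → ℝ :=
  cosSqrtSeries.sum

theorem radius_cosSqrtSeries : cosSqrtSeries.radius = ⊤ := by
  refine FormalMultilinearSeries.ofScalars_radius_eq_top_of_tendsto ℝ _
    (.of_forall fun n => by positivity) ?_
  have hratio (n : ℕ) : ‖(-1) ^ n.succ / ((2 * n.succ)! : ℝ)‖ / ‖(-1) ^ n / ((2 * n)! : ℝ)‖ =
      1 / ((2 * n + 2 : ℝ) * (2 * n + 1)) := by
    have hfactorial : ((2 * n)! : ℝ) ≠ 0 := by positivity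
    simp only [norm_div, norm_pow, norm_neg, norm_one, one_pow, Nat.succ_eq_add_one,
      RCLike.norm_natCast, show 2 * (n + 1) = 2 * n + 1 + 1 by ring, Nat.factorial_succ]
    push_cast
    field_simp
    ring
  simp only [hratio]
  refine squeeze_zero (fun n => by positivity) (fun n => ?_)
    tendsto_one_div_add_atTop_nhds_zero_nat
  gcongr
  nlinarith [(Nat.cast_nonneg n : (0 : ℝ) ≤ n)]

theorem contDiff_cosSqrt : ContDiff ℝ ∞ cosSqrt := by
  have hball := cosSqrtSeries.hasFPowerSeriesOnBall (by simp [radius_cosSqrtSeries])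
  rw [radius_cosSqrtSeries] at hball
  exact AnalyticOnNhd.contDiff fun r _ => hball.analyticAt_of_mem (by simp)

theorem cosSqrt_sq (x : ℝ) : cosSqrt (x ^ 2) = Real.cos x := by
  rw [Real.cos_eq_tsum]
  refine (FormalMultilinearSeries.ofScalars_sum_eq _ (x ^ 2)).trans (tsum_congr fun n => ?_)
  rw [smul_eq_mul, ← pow_mul, div_mul_eq_mul_div]

theorem hasDerivAt_iteratedDeriv_cosSqrt (n : ℕ) (r : ℝ) :
    HasDerivAt (iteratedDeriv n cosSqrt) (iteratedDeriv (n + 1) cosSqrt r) r := by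
  rw [iteratedDeriv_succ]
  exact (contDiff_cosSqrt.differentiable_iteratedDeriv n
    (mod_cast WithTop.coe_lt_top _) r).hasDerivAt

theorem hasDerivAt_iteratedDeriv_cosSqrt_sq (n : ℕ) (x : ℝ) :
    HasDerivAt (fun x => iteratedDeriv n cosSqrt (x ^ 2))
      (iteratedDeriv (n + 1) cosSqrt (x ^ 2) * (2 * x)) x := by
  simpa [comp_def] using (hasDerivAt_iteratedDeriv_cosSqrt n (x ^ 2)).comp x (hasDerivAt_pow 2 x)

theorem two_mul_iteratedDeriv_one_cosSqrt_sq (x : ℝ) :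
    2 * x * iteratedDeriv 1 cosSqrt (x ^ 2) = -Real.sin x := by
  have h := hasDerivAt_iteratedDeriv_cosSqrt_sq 0 x
  simp only [iteratedDeriv_zero, cosSqrt_sq] at h
  rw [← (h.unique (Real.hasDerivAt_cos x)), zero_add, mul_comm]

theorem iteratedDeriv_cosSqrt_ode (n : ℕ) {r : ℝ} (hr : 0 < r) :
    4 * r * iteratedDeriv (n + 2) cosSqrt r + (4 * n + 2) * iteratedDeriv (n + 1) cosSqrt r +
      iteratedDeriv n cosSqrt r = 0 := by
  induction n generalizing r with
  | zero =>
    obtain ⟨x, rfl⟩ : ∃ x : ℝ, x ^ 2 = r := ⟨√r, Real.sq_sqrt hr.le⟩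
    have hleft := ((hasDerivAt_id x).const_mul 2).mul (hasDerivAt_iteratedDeriv_cosSqrt_sq 1 x)
    have hright := (Real.hasDerivAt_sin x).neg.congr_of_eventuallyEq
      (.of_forall two_mul_iteratedDeriv_one_cosSqrt_sq)
    have h := hleft.unique hright
    simp only [id_eq, mul_one, Nat.reduceAdd, zero_add, CharP.cast_eq_zero, mul_zero,
      iteratedDeriv_zero, cosSqrt_sq] at h ⊢
    linarith
  | succ n ih =>
    have hleft := ((((hasDerivAt_id r).const_mul 4).mul
      (hasDerivAt_iteratedDeriv_cosSqrt (n + 2) r)).add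
        ((hasDerivAt_iteratedDeriv_cosSqrt (n + 1) r).const_mul (4 * n + 2 : ℝ))).add
          (hasDerivAt_iteratedDeriv_cosSqrt n r)
    have hright := (hasDerivAt_const r (0 : ℝ)).congr_of_eventuallyEq
      ((eventually_gt_nhds hr).mono fun s hs => ih hs)
    have h := hleft.unique hright
    simp only [id_eq, mul_one, Nat.cast_add, Nat.cast_one] at h ⊢
    linarith

theorem four_mul_abs_iteratedDeriv_cosSqrt_le (n : ℕ) {r : ℝ} (hr : 0 < r) :
    4 * r * |iteratedDeriv (n + 2) cosSqrt r| ≤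
      (4 * n + 2) * |iteratedDeriv (n + 1) cosSqrt r| + |iteratedDeriv n cosSqrt r| := by
  calc 4 * r * |iteratedDeriv (n + 2) cosSqrt r|
      = |4 * r * iteratedDeriv (n + 2) cosSqrt r| := by
        rw [abs_mul, abs_of_pos (by positivity : 0 < 4 * r)]
    _ = |(4 * n + 2) * iteratedDeriv (n + 1) cosSqrt r + iteratedDeriv n cosSqrt r| := by
        rw [← abs_neg]
        congr 1
        linarith [iteratedDeriv_cosSqrt_ode n hr]
    _ ≤ (4 * n + 2) * |iteratedDeriv (n + 1) cosSqrt r| + |iteratedDeriv n cosSqrt r| := by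
        refine (abs_add_le _ _).trans_eq ?_
        rw [abs_mul, abs_of_pos (by positivity : (0 : ℝ) < 4 * n + 2)]

theorem exists_abs_iteratedDeriv_cosSqrt_le (n : ℕ) :
    ∃ C, ∀ r ≥ 1, |iteratedDeriv n cosSqrt r| ≤ C := by
  induction n using Nat.twoStepInduction with
  | zero =>
    refine ⟨1, fun r hr => ?_⟩
    rw [iteratedDeriv_zero, ← Real.sq_sqrt (zero_le_one.trans hr), cosSqrt_sq]
    exact Real.abs_cos_le_one _
  | one =>
    refine ⟨1, fun r hr => ?_⟩
    have hsqrt : 1 ≤ √r := Real.one_le_sqrt.2 hr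
    have hsqrt_pos : 0 < 2 * √r := by linarith
    have h : 2 * √r * |iteratedDeriv 1 cosSqrt r| ≤ 1 := by
      calc 2 * √r * |iteratedDeriv 1 cosSqrt r|
          = |2 * √r * iteratedDeriv 1 cosSqrt (√r ^ 2)| := by
            rw [Real.sq_sqrt (zero_le_one.trans hr), abs_mul, abs_of_pos hsqrt_pos]
        _ = |Real.sin √r| := by rw [two_mul_iteratedDeriv_one_cosSqrt_sq, abs_neg]
        _ ≤ 1 := Real.abs_sin_le_one _
    nlinarith [abs_nonneg (iteratedDeriv 1 cosSqrt r)]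
  | more n ih₀ ih₁ =>
    obtain ⟨C₀, hC₀⟩ := ih₀
    obtain ⟨C₁, hC₁⟩ := ih₁
    refine ⟨(4 * n + 2) * C₁ + C₀, fun r hr => ?_⟩
    have h := four_mul_abs_iteratedDeriv_cosSqrt_le n (zero_lt_one.trans_le hr)
    have hle : (4 * n + 2) * |iteratedDeriv (n + 1) cosSqrt r| + |iteratedDeriv n cosSqrt r| ≤
        (4 * n + 2) * C₁ + C₀ := by
      gcongr
      exacts [hC₁ r hr, hC₀ r hr]
    nlinarith [abs_nonneg (iteratedDeriv (n + 2) cosSqrt r)]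

theorem hasTemperateGrowth_of_eqOn_zero_of_bounded {f g : ℝ → ℝ} {a b : ℝ} (hf : ContDiff ℝ ∞ f)
    (hzero : ∀ r < a, f r = 0) (heq : ∀ r > b, f r = g r)
    (hg : ∀ n, ∃ C, ∀ r > b, |iteratedDeriv n g r| ≤ C) : f.HasTemperateGrowth := by
  refine ⟨hf, fun n => ?_⟩
  obtain ⟨C, hC⟩ := hg n
  obtain ⟨D, hD⟩ := (isCompact_Icc (a := a) (b := b)).exists_bound_of_continuousOn
    (hf.continuous_iteratedDeriv n (mod_cast le_top)).continuousOn
  refine ⟨0, max (max C D) 0, fun r => ?_⟩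
  rw [norm_iteratedFDeriv_eq_norm_iteratedDeriv, pow_zero, mul_one]
  rcases lt_or_ge r a with hra | har
  · have hzero' : f =ᶠ[𝓝 r] fun _ => 0 := (eventually_lt_nhds hra).mono hzero
    rw [hzero'.iteratedDeriv_eq n]
    simp [iteratedDeriv_fun_const_zero]
  rcases lt_or_ge b r with hbr | hrb
  · have heq' : f =ᶠ[𝓝 r] g := (eventually_gt_nhds hbr).mono heq
    rw [heq'.iteratedDeriv_eq n]
    exact (hC r hbr).trans (by simp)
  · exact (hD r ⟨har, hrb⟩).trans (by simp)

/-- The function `cosSqrt` cut off to the left of `-1`, which makes it of temperate growth: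
`cosSqrt r = cosh √(-r)` grows faster than any polynomial as `r → -∞`. -/
noncomputable def truncCosSqrt (r : ℝ) : ℝ :=
  Real.smoothTransition (r + 1) * cosSqrt r

theorem truncCosSqrt_of_nonneg {r : ℝ} (hr : 0 ≤ r) : truncCosSqrt r = cosSqrt r := by
  rw [truncCosSqrt, Real.smoothTransition.one_of_one_le (by linarith), one_mul]

theorem truncCosSqrt_sq (x : ℝ) : truncCosSqrt (x ^ 2) = Real.cos x := by
  rw [truncCosSqrt_of_nonneg (sq_nonneg x), cosSqrt_sq]

theorem hasTemperateGrowth_truncCosSqrt : truncCosSqrt.HasTemperateGrowth := by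
  refine hasTemperateGrowth_of_eqOn_zero_of_bounded (g := cosSqrt) (a := -1) (b := 1) ?_
    (fun r hr => ?_) (fun r hr => truncCosSqrt_of_nonneg (zero_le_one.trans hr.le)) (fun n => ?_)
  · exact (Real.smoothTransition.contDiff.comp (contDiff_id.add contDiff_const)).mul
      contDiff_cosSqrt
  · rw [truncCosSqrt, Real.smoothTransition.zero_of_nonpos (by linarith), zero_mul]
  · obtain ⟨C, hC⟩ := exists_abs_iteratedDeriv_cosSqrt_le n
    exact ⟨C, fun r hr => hC r hr.le⟩

theorem neg_two_mul_deriv_truncCosSqrt_sq (x : ℝ) :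
    -2 * x * deriv truncCosSqrt (x ^ 2) = Real.sin x := by
  have h := ((hasTemperateGrowth_truncCosSqrt.1.differentiable (by simp)
    (x ^ 2)).hasDerivAt).comp x (hasDerivAt_pow 2 x)
  simp only [comp_def, truncCosSqrt_sq] at h
  have hcos := h.unique (Real.hasDerivAt_cos x)
  simp only [Nat.cast_ofNat, Nat.add_one_sub_one, pow_one] at hcos
  linarith

theorem hasTemperateGrowth_cexp_mul_I :
    (fun θ : ℝ => Complex.exp (θ * Complex.I)).HasTemperateGrowth := by
  have hcexp : (fun θ : ℝ => Complex.exp (θ * Complex.I)) = fun θ : ℝ =>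
      (truncCosSqrt (θ ^ 2) : ℂ) + (-2 * θ * deriv truncCosSqrt (θ ^ 2) : ℝ) * Complex.I := by
    ext θ
    rw [truncCosSqrt_sq, neg_two_mul_deriv_truncCosSqrt_sq, Complex.exp_mul_I, Complex.ofReal_cos,
      Complex.ofReal_sin]
  have hE := hasTemperateGrowth_truncCosSqrt
  have hE' := hasTemperateGrowth_deriv hE
  rw [hcexp]
  fun_prop

end CosSqrt

section WaveKernels

variable {E : Type*} [NormedAddCommGroup E] [InnerProductSpace ℝ E]

/-- The part even in `t` of the plane wave `exp (2πi ⟪(η, τ), (x, t)⟫)`, as a function of the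
frequency `(η, τ)` and of the point `(x, s)` with `s = t ^ 2`; it is extended to `s < 0` by
`truncCosSqrt`, so as to grow only polynomially. -/
noncomputable def evenKernel (q : WithLp 2 (E × ℝ) × E × ℝ) : ℂ :=
  Complex.exp ((2 * π * ⟪q.1.fst, q.2.1⟫ : ℝ) * Complex.I) *
    truncCosSqrt ((2 * π * q.1.snd) ^ 2 * q.2.2)

/-- The part odd in `t` of the plane wave `exp (2πi ⟪(η, τ), (x, t)⟫)` divided by `t`, in the
same variables as `evenKernel`. -/
noncomputable def oddKernel (q : WithLp 2 (E × ℝ) × E × ℝ) : ℂ :=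
  Complex.exp ((2 * π * ⟪q.1.fst, q.2.1⟫ : ℝ) * Complex.I) *
    ((-4 * π * q.1.snd * deriv truncCosSqrt ((2 * π * q.1.snd) ^ 2 * q.2.2) : ℝ) * Complex.I)

theorem cexp_inner_eq_evenKernel_add_oddKernel (y : WithLp 2 (E × ℝ)) (x : E) (t : ℝ) :
    Complex.exp ((2 * π * ⟪y, WithLp.toLp 2 (x, t)⟫ : ℝ) * Complex.I) =
      evenKernel (y, x, t ^ 2) + t * oddKernel (y, x, t ^ 2) := by
  have hinner : 2 * π * ⟪y, WithLp.toLp 2 (x, t)⟫ =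
      2 * π * ⟪y.fst, x⟫ + 2 * π * y.snd * t := by
    simp only [WithLp.prod_inner_apply, RCLike.inner_apply, conj_trivial, WithLp.ofLp_fst,
      WithLp.ofLp_snd]
    ring
  have hcos := truncCosSqrt_sq (2 * π * y.snd * t)
  have hsin := neg_two_mul_deriv_truncCosSqrt_sq (2 * π * y.snd * t)
  rw [mul_pow _ t] at hcos hsin
  rw [hinner, Complex.ofReal_add, add_mul, Complex.exp_add,
    Complex.exp_mul_I (2 * π * y.snd * t : ℝ),
    ← Complex.ofReal_cos, ← Complex.ofReal_sin, ← hcos, ← hsin, evenKernel, oddKernel]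
  push_cast
  ring

theorem hasTemperateGrowth_cexp_inner :
    (fun q : WithLp 2 (E × ℝ) × E × ℝ =>
      Complex.exp ((2 * π * ⟪q.1.fst, q.2.1⟫ : ℝ) * Complex.I)).HasTemperateGrowth := by
  have hfst : (fun q : WithLp 2 (E × ℝ) × E × ℝ => q.1.fst).HasTemperateGrowth :=
    (WithLp.fstL 2 ℝ E ℝ).hasTemperateGrowth.comp (by fun_prop)
  have hinner : (fun q : WithLp 2 (E × ℝ) × E × ℝ => ⟪q.1.fst, q.2.1⟫).HasTemperateGrowth :=
    (innerSL ℝ).bilinear_hasTemperateGrowth hfst (by fun_prop)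
  exact hasTemperateGrowth_cexp_mul_I.comp ((HasTemperateGrowth.const (2 * π)).mul hinner)

theorem hasTemperateGrowth_evenKernel :
    (evenKernel : WithLp 2 (E × ℝ) × E × ℝ → ℂ).HasTemperateGrowth := by
  have hsnd : (fun q : WithLp 2 (E × ℝ) × E × ℝ => q.1.snd).HasTemperateGrowth :=
    (WithLp.sndL 2 ℝ E ℝ).hasTemperateGrowth.comp (by fun_prop)
  have htrunc := hasTemperateGrowth_truncCosSqrt
  have hcexp := hasTemperateGrowth_cexp_inner (E := E)
  unfold evenKernel
  fun_prop

theorem hasTemperateGrowth_oddKernel :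
    (oddKernel : WithLp 2 (E × ℝ) × E × ℝ → ℂ).HasTemperateGrowth := by
  have hsnd : (fun q : WithLp 2 (E × ℝ) × E × ℝ => q.1.snd).HasTemperateGrowth :=
    (WithLp.sndL 2 ℝ E ℝ).hasTemperateGrowth.comp (by fun_prop)
  have hderiv := hasTemperateGrowth_deriv hasTemperateGrowth_truncCosSqrt
  have hcexp := hasTemperateGrowth_cexp_inner (E := E)
  unfold oddKernel
  fun_prop

end WaveKernels

section Division

/-- The pairs `(α, β)` that are admissible values at `(x, s)` of the two coefficients in a
decomposition `u (x, t) = a (x, t ^ 2) + t * b (x, t ^ 2)`. -/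
def divisionSet {X : Type*} (u : X × ℝ → ℝ) (p : X × ℝ) : Set (ℝ × ℝ) :=
  {c | ∀ t, t ^ 2 = p.2 → u (p.1, t) = c.1 + t * c.2}

theorem convex_divisionSet {X : Type*} (u : X × ℝ → ℝ) (p : X × ℝ) :
    Convex ℝ (divisionSet u p) := by
  intro c hc d hd α β _ _ hαβ t ht
  calc u (p.1, t) = α * u (p.1, t) + β * u (p.1, t) := by rw [← add_mul, hαβ, one_mul]
    _ = α * (c.1 + t * c.2) + β * (d.1 + t * d.2) := by rw [← hc t ht, ← hd t ht]
    _ = (α • c + β • d).1 + t * (α • c + β • d).2 := by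
        simp only [Prod.fst_add, Prod.snd_add, Prod.smul_fst, Prod.smul_snd, smul_eq_mul]
        ring

theorem exists_contDiff_schwartzMap_toLp_eq_add_smul {E F : Type*} [NormedAddCommGroup E]
    [InnerProductSpace ℝ E] [FiniteDimensional ℝ E] [NormedAddCommGroup F] [NormedSpace ℂ F]
    [CompleteSpace F] (f : 𝓢(WithLp 2 (E × ℝ), F)) :
    ∃ a b : E × ℝ → F, ContDiff ℝ ∞ a ∧ ContDiff ℝ ∞ b ∧
      ∀ x t, f (WithLp.toLp 2 (x, t)) = a (x, t ^ 2) + (t : ℂ) • b (x, t ^ 2) := by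
  borelize E
  have heven := hasTemperateGrowth_evenKernel (E := E)
  have hodd := hasTemperateGrowth_oddKernel (E := E)
  refine ⟨fun p => ∫ y, evenKernel (y, p) • 𝓕 f y, fun p => ∫ y, oddKernel (y, p) • 𝓕 f y,
    contDiff_integral_smul_schwartzMap heven _, contDiff_integral_smul_schwartzMap hodd _,
    fun x t => ?_⟩
  have heven_int : Integrable fun y => evenKernel (y, x, t ^ 2) • 𝓕 f y :=
    integrable_smul_schwartzMap (heven.comp (hasTemperateGrowth_prodMk_right _)) _
  have hodd_int : Integrable fun y => oddKernel (y, x, t ^ 2) • 𝓕 f y :=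
    integrable_smul_schwartzMap (hodd.comp (hasTemperateGrowth_prodMk_right _)) _
  calc f (WithLp.toLp 2 (x, t))
      = 𝓕⁻ (𝓕 f) (WithLp.toLp 2 (x, t)) := by rw [FourierTransform.fourierInv_fourier_eq]
    _ = ∫ y, Complex.exp ((2 * π * ⟪y, WithLp.toLp 2 (x, t)⟫ : ℝ) * Complex.I) • 𝓕 f y := by
        rw [SchwartzMap.fourierInv_coe, Real.fourierInv_eq']
    _ = ∫ y, (evenKernel (y, x, t ^ 2) • 𝓕 f y + (t : ℂ) • oddKernel (y, x, t ^ 2) • 𝓕 f y) := by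
        simp only [cexp_inner_eq_evenKernel_add_oddKernel, add_smul, mul_smul]
    _ = _ := by rw [integral_add heven_int (hodd_int.fun_smul (t : ℂ)), integral_smul]

variable {E : Type*} [NormedAddCommGroup E] [NormedSpace ℝ E] [FiniteDimensional ℝ E]

theorem exists_contDiff_eq_add_mul_of_hasCompactSupport {u : E × ℝ → ℝ} (hu : ContDiff ℝ ∞ u)
    (hsupp : HasCompactSupport u) :
    ∃ a b : E × ℝ → ℝ, ContDiff ℝ ∞ a ∧ ContDiff ℝ ∞ b ∧
      ∀ x t, u (x, t) = a (x, t ^ 2) + t * b (x, t ^ 2) := by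
  let e : WithLp 2 (EuclideanSpace ℝ (Fin (Module.finrank ℝ E)) × ℝ) ≃L[ℝ] E × ℝ :=
    (WithLp.prodContinuousLinearEquiv 2 ℝ _ ℝ).trans
      (toEuclidean.symm.prodCongr (.refl ℝ ℝ))
  let v (y) : ℂ := u (e y)
  have hv : ContDiff ℝ ∞ v := Complex.ofRealCLM.contDiff.comp (hu.comp e.contDiff)
  have hv_supp : HasCompactSupport v :=
    (hsupp.comp_homeomorph e.toHomeomorph).comp_left Complex.ofReal_zero
  obtain ⟨a, b, ha, hb, hab⟩ := exists_contDiff_schwartzMap_toLp_eq_add_smul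
    (hv_supp.toSchwartzMap hv)
  have htransport {c : EuclideanSpace ℝ (Fin (Module.finrank ℝ E)) × ℝ → ℂ}
      (hc : ContDiff ℝ ∞ c) : ContDiff ℝ ∞ fun p : E × ℝ => (c (toEuclidean p.1, p.2)).re :=
    Complex.reCLM.contDiff.comp
      (hc.comp ((toEuclidean.contDiff.comp contDiff_fst).prodMk contDiff_snd))
  refine ⟨_, _, htransport ha, htransport hb, fun x t => ?_⟩
  have h := congrArg Complex.re (hab (toEuclidean x) t)
  simpa [v, e] using h

theorem exists_contDiff_eventually_mem_divisionSet {u : E × ℝ → ℝ} (hu : ContDiff ℝ ∞ u)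
    (p₀ : E × ℝ) :
    ∃ g : E × ℝ → ℝ × ℝ, ContDiff ℝ ∞ g ∧ ∀ᶠ p in 𝓝 p₀, g p ∈ divisionSet u p := by
  let R : ℝ := ‖p₀‖ + 2
  have hR : 0 < R := by positivity
  let χ : ContDiffBump (0 : E × ℝ) := ⟨R, R + 1, hR, by linarith⟩
  obtain ⟨a, b, ha, hb, hab⟩ := exists_contDiff_eq_add_mul_of_hasCompactSupport
    (χ.contDiff.mul hu) χ.hasCompactSupport.mul_right
  refine ⟨fun p => (a p, b p), ha.prodMk hb, ?_⟩
  filter_upwards [Metric.ball_mem_nhds p₀ one_pos] with p hp t ht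
  have hp_norm : ‖p‖ < R - 1 := by
    have hp_lt := norm_lt_of_mem_ball hp
    simp only [R]
    linarith
  have hχ : χ (p.1, t) = 1 := by
    refine χ.one_of_mem_closedBall (mem_closedBall_zero_iff.2 (norm_prod_le_iff.2 ⟨?_, ?_⟩))
    · exact ((norm_fst_le p).trans_lt (hp_norm.trans (sub_one_lt R))).le
    · have ht_sq : t ^ 2 < R - 1 := (le_abs_self _).trans_lt (ht ▸ (norm_snd_le p).trans_lt hp_norm)
      exact abs_le_of_sq_le_sq (by nlinarith) hR.le
  rw [← one_mul (u _), ← hχ]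
  simpa [ht] using hab p.1 t

theorem stmt9_general (u : E × ℝ → ℝ) (hu : ContDiff ℝ ∞ u) :
    ∃ a b : E × ℝ → ℝ, ContDiff ℝ ∞ a ∧ ContDiff ℝ ∞ b ∧
      ∀ x t, u (x, t) = a (x, t ^ 2) + t * b (x, t ^ 2) := by
  obtain ⟨g, hg⟩ := exists_contMDiffMap_forall_mem_convex_of_local (n := ⊤) 𝓘(ℝ, E × ℝ)
    (convex_divisionSet u) fun p₀ => by
      obtain ⟨g, hg, hmem⟩ := exists_contDiff_eventually_mem_divisionSet hu p₀
      exact ⟨_, hmem, g, hg.contMDiff.contMDiffOn, fun p hp => hp⟩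
  have hg_smooth : ContDiff ℝ ∞ g := g.contMDiff.contDiff
  exact ⟨fun p => (g p).1, fun p => (g p).2, hg_smooth.fst, hg_smooth.snd,
    fun x t => hg (x, t ^ 2) t rfl⟩

end Division

/-- Whitney division: every smooth function germ `u : (ℝ²,0) → ℝ` in the
variables `(ξ,t)` can be written as `u(ξ,t) = a(ξ,t²) + t·b(ξ,t²)` for smooth
function germs `a, b`. -/
theorem stmt9 (u : ℝ × ℝ → ℝ) (hu : ContDiff ℝ (⊤ : ℕ∞) u) :
    ∃ a b : ℝ × ℝ → ℝ, ContDiff ℝ (⊤ : ℕ∞) a ∧ ContDiff ℝ (⊤ : ℕ∞) b ∧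
      ∀ᶠ p in nhds (0 : ℝ × ℝ),
        u p = a (p.1, p.2 ^ 2) + p.2 * b (p.1, p.2 ^ 2) := by
  obtain ⟨a, b, ha, hb, hab⟩ := stmt9_general u hu
  exact ⟨a, b, ha, hb, .of_forall fun p => hab p.1 p.2⟩
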